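/- arXiv:2311.16962 — 8 statements merged into one kernel-verified Lean document; each statement's English description precedes it below -/
import Mathlib

section
/- Let X and H be complex Hilbert spaces, let A : X → H and T : X → X be bounded linear operators, let A† : H → X denote the Hilbert-space adjoint of A, and set F = A ∘ T ∘ A† : H → H. Assume T is coercive on the closed range of A†, i.e. there exists c > 0 such that |⟨T f, f⟩| ≥ c‖f‖² for all f in the closure of A†(H). Then for every g ∈ H with g ≠ 0 the following equivalence holds: g belongs to the range of A if and only if inf { |⟨F ψ, ψ⟩| : ψ ∈ H, ⟨g, ψ⟩ = 1 } > 0. -/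
/-!
Since `⟪ψ, F ψ⟫ = ⟪A†ψ, T (A†ψ)⟫`, coercivity and boundedness of `T` make `‖⟪ψ, F ψ⟫‖` comparable
to `‖A†ψ‖²`. If `g = A φ`, then `1 = ⟪A†ψ, φ⟫` forces `‖A†ψ‖ ≥ 1 / ‖φ‖`, so the infimum is positive.
Conversely, a positive infimum gives, by homogeneity, `‖⟪ψ, g⟫‖ ≤ K ‖A†ψ‖` for all `ψ`; then
`A†ψ ↦ ⟪g, ψ⟫` is a well-defined bounded functional on the range of `A†`, and its Riesz
representative `x` satisfies `A x = g` (`mem_range_of_norm_inner_le`).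
-/

open ContinuousLinearMap
open scoped InnerProductSpace

/-- The rank-one case of Douglas' range inclusion lemma. -/
theorem mem_range_of_norm_inner_le
    {X H : Type*} [NormedAddCommGroup X] [InnerProductSpace ℂ X] [CompleteSpace X]
    [NormedAddCommGroup H] [InnerProductSpace ℂ H] [CompleteSpace H]
    (A : X →L[ℂ] H) (g : H) (K : ℝ) (hK : ∀ ψ : H, ‖⟪g, ψ⟫_ℂ‖ ≤ K * ‖adjoint A ψ‖) :
    g ∈ Set.range A := by
  let f : H →ₗ[ℂ] ℂ := (innerSL ℂ g).toLinearMap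
  let e : H →ₗ[ℂ] X := (adjoint A).toLinearMap
  have hfe : ∃ C : ℝ, ∀ ψ : H, ‖f ψ‖ ≤ C * ‖e ψ‖ := ⟨K, hK⟩
  obtain ⟨ℓ, hℓ, -⟩ := exists_extension_norm_eq (LinearMap.range e) (f.compLeftInverse e)
  refine ⟨(InnerProductSpace.toDual ℂ X).symm ℓ, ext_inner_right ℂ fun ψ => ?_⟩
  rw [← adjoint_inner_right, InnerProductSpace.toDual_symm_apply]
  have h1 := hℓ ⟨e ψ, ψ, rfl⟩
  have h2 := LinearMap.compLeftInverse_apply_of_bdd f e hfe ψ (e ψ) rfl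
  exact h1.trans h2

/-- **Kirsch's range characterization (Theorem 3).**
Let `X` and `H` be complex Hilbert spaces, `A : X → H` and `T : X → X` bounded linear
operators, `A†` the Hilbert-space adjoint of `A`, and `F = A ∘ T ∘ A†`.  Assume `T` is
coercive on the closure of the range of `A†`: there is `c > 0` with
`|⟨T f, f⟩| ≥ c‖f‖²` for all `f` in that closure.  Then for every `g ≠ 0` in `H`,
`g ∈ range A` iff `inf { |⟨F ψ, ψ⟩| : ψ ∈ H, ⟨g, ψ⟩ = 1 } > 0`.
(The paper's inner product `⟨·,·⟩` is linear in the *first* argument, so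
`⟨a, b⟩ = ⟪b, a⟫_ℂ` in Mathlib's convention.) -/
theorem range_characterization_via_inf
    {X H : Type*} [NormedAddCommGroup X] [InnerProductSpace ℂ X] [CompleteSpace X]
    [NormedAddCommGroup H] [InnerProductSpace ℂ H] [CompleteSpace H]
    (A : X →L[ℂ] H) (T : X →L[ℂ] X)
    (F : H →L[ℂ] H) (hF : F = A.comp (T.comp (adjoint A)))
    (c : ℝ) (hc : 0 < c)
    (hcoer : ∀ f ∈ closure (Set.range (adjoint A)), c * ‖f‖ ^ 2 ≤ ‖⟪f, T f⟫_ℂ‖)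
    (g : H) (hg : g ≠ 0) :
    g ∈ Set.range A ↔
      0 < sInf {r : ℝ | ∃ ψ : H, ⟪ψ, g⟫_ℂ = 1 ∧ r = ‖⟪ψ, F ψ⟫_ℂ‖} := by
  have hform : ∀ ψ : H, ⟪ψ, F ψ⟫_ℂ = ⟪adjoint A ψ, T (adjoint A ψ)⟫_ℂ := by
    intro ψ
    rw [hF, adjoint_inner_left]
    rfl
  constructor
  · rintro ⟨φ, rfl⟩
    have hφ : 0 < ‖φ‖ := by
      rw [norm_pos_iff]
      rintro rfl
      exact hg (map_zero A)
    -- nonemptiness of the constraint set matters: `sInf ∅ = 0` in `ℝ`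
    have hne : {r : ℝ | ∃ ψ : H, ⟪ψ, A φ⟫_ℂ = 1 ∧ r = ‖⟪ψ, F ψ⟫_ℂ‖}.Nonempty := by
      refine ⟨_, (starRingEnd ℂ) (⟪A φ, A φ⟫_ℂ)⁻¹ • A φ, ?_, rfl⟩
      rw [inner_smul_left, Complex.conj_conj]
      exact inv_mul_cancel₀ (inner_self_ne_zero.mpr hg)
    refine lt_of_lt_of_le (show 0 < c * (1 / ‖φ‖) ^ 2 by positivity) (le_csInf hne ?_)
    rintro r ⟨ψ, hψ, rfl⟩
    rw [hform]
    refine le_trans ?_ (hcoer _ (subset_closure ⟨ψ, rfl⟩))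
    have h1 : 1 ≤ ‖adjoint A ψ‖ * ‖φ‖ := by
      have h := norm_inner_le_norm (𝕜 := ℂ) (adjoint A ψ) φ
      rwa [adjoint_inner_left, hψ, norm_one] at h
    have h2 : 1 / ‖φ‖ ≤ ‖adjoint A ψ‖ := (div_le_iff₀ hφ).mpr h1
    gcongr
  · intro hm
    set m := sInf {r : ℝ | ∃ ψ : H, ⟪ψ, g⟫_ℂ = 1 ∧ r = ‖⟪ψ, F ψ⟫_ℂ‖} with hmdef
    have hbdd : BddBelow {r : ℝ | ∃ ψ : H, ⟪ψ, g⟫_ℂ = 1 ∧ r = ‖⟪ψ, F ψ⟫_ℂ‖} := by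
      refine ⟨0, ?_⟩
      rintro r ⟨ψ, -, rfl⟩
      exact norm_nonneg _
    have hnorm : ∀ ψ : H, ⟪ψ, g⟫_ℂ = 1 → m ≤ ‖T‖ * ‖adjoint A ψ‖ ^ 2 := by
      intro ψ hψ
      refine (csInf_le hbdd ⟨ψ, hψ, rfl⟩).trans ?_
      rw [hform]
      calc _ ≤ ‖adjoint A ψ‖ * ‖T (adjoint A ψ)‖ := norm_inner_le_norm _ _
        _ ≤ ‖adjoint A ψ‖ * (‖T‖ * ‖adjoint A ψ‖) := by gcongr; exact T.le_opNorm _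
        _ = _ := by ring
    refine mem_range_of_norm_inner_le A g (√(‖T‖ / m)) fun ψ => ?_
    by_cases ha : ⟪g, ψ⟫_ℂ = 0
    · rw [ha, norm_zero]
      positivity
    have ha' : 0 < ‖⟪g, ψ⟫_ℂ‖ := norm_pos_iff.mpr ha
    -- rescale `ψ` to meet the constraint
    have h := hnorm ((⟪g, ψ⟫_ℂ)⁻¹ • ψ) (by
      rw [inner_smul_left, map_inv₀, inner_conj_symm]
      exact inv_mul_cancel₀ fun h0 => ha (inner_eq_zero_symm.mp h0))
    rw [map_smul, norm_smul, norm_inv, mul_pow, inv_pow] at h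
    have h3 : ‖⟪g, ψ⟫_ℂ‖ ^ 2 ≤ ‖T‖ / m * ‖adjoint A ψ‖ ^ 2 := by
      rw [div_mul_eq_mul_div, le_div_iff₀ hm]
      calc _ ≤ ‖⟪g, ψ⟫_ℂ‖ ^ 2 *
            (‖T‖ * ((‖⟪g, ψ⟫_ℂ‖ ^ 2)⁻¹ * ‖adjoint A ψ‖ ^ 2)) := by gcongr
        _ = _ := by field_simp
    refine le_of_sq_le_sq ?_ (by positivity)
    rw [mul_pow, Real.sq_sqrt (by positivity)]
    exact h3
end

section
/- Let X and H be complex Hilbert spaces, let A : X → H and T : X → X be bounded linear operators, let A† denote the adjoint of A, and set F = A ∘ T ∘ A†. Assume there exists c > 0 such that |⟨T f, f⟩| ≥ c‖f‖² for all f in the closure of A†(H). If g = A φ for some φ ∈ X and g ≠ 0, then for every ψ ∈ H with ⟨g, ψ⟩ = 1 one has c ≤ ‖φ‖² · |⟨F ψ, ψ⟩|; in particular inf { |⟨F ψ, ψ⟩| : ψ ∈ H, ⟨g, ψ⟩ = 1 } ≥ c / ‖φ‖² > 0. -/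
/-!
Moving `A` across the inner product gives `⟨F ψ, ψ⟩ = ⟨T A†ψ, A†ψ⟩`, which coercivity bounds
below in modulus by `c ‖A†ψ‖²`. If `⟨g, ψ⟩ = 1` with `g = A φ`, then `⟨φ, A†ψ⟩ = 1`, so
Cauchy–Schwarz gives `1 ≤ ‖A†ψ‖ ‖φ‖`; combining the two yields `c ≤ ‖φ‖² |⟨F ψ, ψ⟩|`.
The bound on the infimum follows because the constraint set is nonempty when `g ≠ 0`.
-/

open ContinuousLinearMap
open scoped InnerProductSpace

/-- **First half of Kirsch's Theorem 3.**
If `F = A ∘ T ∘ A†` where `T` is coercive on the closure of the range of `A†`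
(with constant `c > 0`), and `g = A φ` with `g ≠ 0`, then for every `ψ ∈ H` with
`⟨g, ψ⟩ = 1` one has `c ≤ ‖φ‖² |⟨F ψ, ψ⟩|`; in particular
`inf { |⟨F ψ, ψ⟩| : ψ ∈ H, ⟨g, ψ⟩ = 1 } ≥ c/‖φ‖² > 0`.
(The paper's inner product `⟨·,·⟩` is linear in the *first* argument, so
`⟨a, b⟩ = ⟪b, a⟫_ℂ` in Mathlib's convention.) -/
theorem coercivity_lower_bound_of_mem_range
    {X H : Type*} [NormedAddCommGroup X] [InnerProductSpace ℂ X] [CompleteSpace X]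
    [NormedAddCommGroup H] [InnerProductSpace ℂ H] [CompleteSpace H]
    (A : X →L[ℂ] H) (T : X →L[ℂ] X)
    (F : H →L[ℂ] H) (hF : F = A.comp (T.comp (adjoint A)))
    (c : ℝ) (hc : 0 < c)
    (hcoer : ∀ f ∈ closure (Set.range (adjoint A)), c * ‖f‖ ^ 2 ≤ ‖⟪f, T f⟫_ℂ‖)
    (g : H) (hg : g ≠ 0) (φ : X) (hgA : g = A φ) :
    (∀ ψ : H, ⟪ψ, g⟫_ℂ = 1 → c ≤ ‖φ‖ ^ 2 * ‖⟪ψ, F ψ⟫_ℂ‖) ∧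
      c / ‖φ‖ ^ 2 ≤ sInf {r : ℝ | ∃ ψ : H, ⟪ψ, g⟫_ℂ = 1 ∧ r = ‖⟪ψ, F ψ⟫_ℂ‖} ∧
      0 < c / ‖φ‖ ^ 2 := by
  have hφ : 0 < ‖φ‖ := by
    refine norm_pos_iff.mpr fun h => hg ?_
    rw [hgA, h, map_zero]
  have key : ∀ ψ : H, ⟪ψ, g⟫_ℂ = 1 → c ≤ ‖φ‖ ^ 2 * ‖⟪ψ, F ψ⟫_ℂ‖ := by
    intro ψ hψ
    have hquad : ⟪ψ, F ψ⟫_ℂ = ⟪adjoint A ψ, T (adjoint A ψ)⟫_ℂ := by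
      rw [hF, adjoint_inner_left]
      rfl
    have hone : 1 ≤ ‖adjoint A ψ‖ * ‖φ‖ := by
      have h := norm_inner_le_norm (𝕜 := ℂ) (adjoint A ψ) φ
      rwa [adjoint_inner_left, ← hgA, hψ, norm_one] at h
    have hT := hcoer (adjoint A ψ) (subset_closure ⟨ψ, rfl⟩)
    rw [hquad]
    calc c = c * 1 := (mul_one c).symm
      _ ≤ c * (‖adjoint A ψ‖ * ‖φ‖) ^ 2 := by
          gcongr
          exact one_le_pow₀ hone
      _ = ‖φ‖ ^ 2 * (c * ‖adjoint A ψ‖ ^ 2) := by ring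
      _ ≤ ‖φ‖ ^ 2 * ‖⟪adjoint A ψ, T (adjoint A ψ)⟫_ℂ‖ := by gcongr
  refine ⟨key, ?_, by positivity⟩
  apply le_csInf
  -- Nonemptiness rules out the junk value `sInf ∅ = 0`; the witness is `g / ‖g‖²`.
  · refine ⟨_, ((‖g‖ : ℂ) ^ 2)⁻¹ • g, ?_, rfl⟩
    have hg_ne : (‖g‖ : ℂ) ≠ 0 := by exact_mod_cast norm_ne_zero_iff.mpr hg
    rw [inner_smul_left, inner_self_eq_norm_sq_to_K]
    simp [hg_ne]
  · rintro r ⟨ψ, hψ, rfl⟩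
    rw [div_le_iff₀' (by positivity)]
    exact key ψ hψ
end

section
/- Let X and H be complex Hilbert spaces, let A : X → H be a bounded linear operator with adjoint A† : H → X, and let g ∈ H be an element that does not belong to the range of A. Let V = { ψ ∈ H : ⟨g, ψ⟩ = 0 } be the orthogonal complement of the span of g. Then A†(V) is dense in the closure of A†(H). -/
/-! Let `W = A†(V)`. If `x ⊥ W`, then `A x ⊥ V`, so `A x = c • g` because `Vᗮ = span {g}`.
As `g` is not in the range of `A`, this forces `c = 0`, i.e. `A x = 0`, so `x ⊥ A†(H)`. Hence
`A†(H) ⊆ Wᗮᗮ`, which is the closure of `W`. -/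

open ContinuousLinearMap
open scoped InnerProductSpace

/-- **Density step in Kirsch's Theorem 3.**
If `g ∈ H` does not belong to the range of `A : X → H` and
`V = {ψ ∈ H : ⟨g, ψ⟩ = 0}` is the orthogonal complement of `span {g}`, then
`A†(V)` is dense in the closure of `A†(H)`.
(The paper's inner product `⟨·,·⟩` is linear in the *first* argument, so
`⟨g, ψ⟩ = ⟪ψ, g⟫_ℂ` in Mathlib's convention.) -/
theorem adjoint_image_orthoComplement_dense
    {X H : Type*} [NormedAddCommGroup X] [InnerProductSpace ℂ X] [CompleteSpace X]
    [NormedAddCommGroup H] [InnerProductSpace ℂ H] [CompleteSpace H]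
    (A : X →L[ℂ] H) (g : H) (hg : g ∉ Set.range A) :
    closure (adjoint A '' {ψ : H | ⟪ψ, g⟫_ℂ = 0}) =
      closure (Set.range (adjoint A)) := by
  refine Set.Subset.antisymm (closure_mono (Set.image_subset_range _ _))
    (closure_minimal ?_ isClosed_closure)
  let W : Submodule ℂ X := (ℂ ∙ g)ᗮ.map (adjoint A : H →ₗ[ℂ] X)
  have hW : adjoint A '' {ψ : H | ⟪ψ, g⟫_ℂ = 0} = (W : Set X) := by
    ext x
    simp [W, Submodule.mem_orthogonal_singleton_iff_inner_left]
  rw [hW, ← Submodule.topologicalClosure_coe, ← Submodule.orthogonal_orthogonal_eq_closure]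
  rintro _ ⟨φ, rfl⟩
  refine (Submodule.mem_orthogonal' _ _).2 fun x hx => ?_
  have hAx : A x ∈ (ℂ ∙ g)ᗮᗮ := by
    refine (Submodule.mem_orthogonal _ _).2 fun ψ hψ => ?_
    rw [← adjoint_inner_left]
    exact (Submodule.mem_orthogonal _ _).1 hx _ (Submodule.mem_map_of_mem hψ)
  rw [Submodule.orthogonal_orthogonal] at hAx
  obtain ⟨c, hc⟩ := Submodule.mem_span_singleton.1 hAx
  have hc0 : c = 0 := by
    by_contra h
    exact hg ⟨c⁻¹ • x, by rw [map_smul, ← hc, inv_smul_smul₀ h]⟩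
  rw [adjoint_inner_left, ← hc, hc0, zero_smul, inner_zero_right]
end

section
/- Let X and H be complex Hilbert spaces, let A : X → H and T : X → X be bounded linear operators with A† the adjoint of A, and set F = A ∘ T ∘ A† : H → H. Assume: (i) F is compact and injective; (ii) there exists γ > 0 such that the operator I + iγF is unitary; (iii) there exists c > 0 such that |⟨T f, f⟩| ≥ c‖f‖² for all f in the closure of A†(H); (iv) T = T₀ + C where C is compact and T₀ is self-adjoint with ⟨T₀ f, f⟩ ≥ c₀‖f‖² for some c₀ > 0 and all f in the closure of A†(H); (v) Im⟨T φ, φ⟩ ≠ 0 for every nonzero φ in the closure of A†(H). Then the range of A coincides with the range of |F|^{1/2} = (F†F)^{1/4}, the positive fourth root of the positive operator F†F obtained from the continuous functional calculus. -/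
/-!
Write `F = R + iJ` with `R = ℜ F` and `J = ℑ F` self-adjoint. Unitarity of `I + iγF` makes `F`
normal and gives `Im ⟪x, F x⟫ = (γ / 2) ‖F x‖²`; so `R` and `J` commute, `J ≥ 0`, and
`F†F = R² + J²`. As `⟪x, F x⟫ = ⟪A†x, T A†x⟫`, also `Im ⟪f, T f⟫ ≥ 0` on the closure `V` of the
range of `A†`.

A weak-compactness argument (`exists_coercive`) produces `K ≥ 0` such that
`Re ⟪f, T f⟫ + K Im ⟪f, T f⟫ ≥ (c₀ / 2) ‖f‖²` on `V`. Hence `R + K J ≥ 0`: the spectrum of `F`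
stays in a sector away from the negative real axis. Operator monotonicity of the square root then
gives `R + K J ≤ (1 + K) |F|` and `|F| ≤ R + (2K + 1) J` (`le_sqrt_of_commute`,
`sqrt_le_of_commute`). Both outer forms are comparable to `‖A†x‖²`, so `‖A†x‖` and
`‖|F|^{1/2} x‖` bound each other up to constants, and Douglas' range inclusion lemma
(`range_subset_range_of_norm_adjoint_le`) gives equality of the ranges of `A` and `|F|^{1/2}`.
-/

open ContinuousLinearMap
open scoped InnerProductSpace

open Filter Topology ComplexStarModule

/-- Douglas' lemma. For fixed `y`, the functional `B†x ↦ ⟪y, A†x⟫` on the range of `B†` is well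
defined and bounded; the Riesz representative `z` of an extension satisfies `B z = A y`. -/
lemma range_subset_range_of_norm_adjoint_le
    {X Y H : Type*} [NormedAddCommGroup X] [InnerProductSpace ℂ X] [CompleteSpace X]
    [NormedAddCommGroup Y] [InnerProductSpace ℂ Y] [CompleteSpace Y]
    [NormedAddCommGroup H] [InnerProductSpace ℂ H] [CompleteSpace H]
    (A : X →L[ℂ] H) (B : Y →L[ℂ] H) (k : ℝ)
    (h : ∀ x, ‖adjoint A x‖ ≤ k * ‖adjoint B x‖) :
    Set.range A ⊆ Set.range B := by
  rintro _ ⟨y, rfl⟩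
  -- `g` is a linear, possibly discontinuous, section of `B†` onto its range;
  -- `A† ∘ g` is nevertheless bounded.
  obtain ⟨g, hg⟩ := (adjoint B).toLinearMap.rangeRestrict.exists_rightInverse_of_surjective
    (LinearMap.range_rangeRestrict _)
  have hg' : ∀ w, adjoint B (g w) = w := fun w =>
    congrArg Subtype.val (LinearMap.congr_fun hg w)
  let f : LinearMap.range (adjoint B).toLinearMap →L[ℂ] X :=
    ((adjoint A).toLinearMap ∘ₗ g).mkContinuous k (fun w => by
      have := h (g w)
      rw [hg'] at this
      exact this)
  obtain ⟨φ, hφ, -⟩ := exists_extension_norm_eq _ ((innerSL ℂ y).comp f)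
  refine ⟨(InnerProductSpace.toDual ℂ Y).symm φ, ext_inner_right ℂ fun x => ?_⟩
  rw [← adjoint_inner_right, ← adjoint_inner_right, InnerProductSpace.toDual_symm_apply]
  have h1 := hφ ⟨adjoint B x, x, rfl⟩
  have h2 : adjoint A (g ⟨adjoint B x, x, rfl⟩) = adjoint A x := by
    have := h (g ⟨adjoint B x, x, rfl⟩ - x)
    rw [map_sub, map_sub, hg', sub_self, norm_zero, mul_zero] at this
    exact sub_eq_zero.1 (norm_le_zero_iff.1 this)
  rw [← h2]
  exact h1

/-- Bounded families have weak limits along ultrafilters (Banach–Alaoglu and Riesz). -/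
lemma exists_weak_limit {X : Type*} [NormedAddCommGroup X] [InnerProductSpace ℂ X]
    [CompleteSpace X] {ι : Type*} (U : Ultrafilter ι) (φ : ι → X) (r : ℝ)
    (hφ : ∀ i, ‖φ i‖ ≤ r) :
    ∃ ψ : X, ∀ y, Tendsto (fun i => ⟪φ i, y⟫_ℂ) U (𝓝 ⟪ψ, y⟫_ℂ) := by
  have hK := WeakDual.isCompact_closedBall (𝕜 := ℂ) (E := X) 0 r
  let F : ι → WeakDual ℂ X := fun i =>
    StrongDual.toWeakDual (InnerProductSpace.toDual ℂ X (φ i))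
  obtain ⟨L, -, hL⟩ := hK.ultrafilter_le_nhds (U.map F) (by
    refine le_principal_iff.2 (Ultrafilter.mem_map.2 (Eventually.of_forall fun i => ?_))
    simpa [F] using hφ i)
  have hL' : Tendsto F U (𝓝 L) := hL
  rw [tendsto_iff_forall_eval_tendsto_topDualPairing] at hL'
  refine ⟨(InnerProductSpace.toDual ℂ X).symm (WeakDual.toStrongDual L), fun y => ?_⟩
  rw [InnerProductSpace.toDual_symm_apply]
  exact hL' y

/-- The quadratic form of a compact operator is weakly continuous on bounded families, because
`C (φ i)` converges in norm to `C ψ`. -/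
lemma tendsto_inner_compact {X : Type*} [NormedAddCommGroup X] [InnerProductSpace ℂ X]
    [CompleteSpace X] {ι : Type*} (U : Ultrafilter ι) (φ : ι → X) (r : ℝ)
    (hφ : ∀ i, ‖φ i‖ ≤ r) (ψ : X)
    (hψ : ∀ y, Tendsto (fun i => ⟪φ i, y⟫_ℂ) U (𝓝 ⟪ψ, y⟫_ℂ))
    (C : X →L[ℂ] X) (hC : IsCompactOperator C) :
    Tendsto (fun i => ⟪φ i, C (φ i)⟫_ℂ) U (𝓝 ⟪ψ, C ψ⟫_ℂ) := by
  obtain ⟨K, hK, hK'⟩ := hC.image_closedBall_subset_compact (f := C.toLinearMap) r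
  obtain ⟨l, -, hl⟩ := hK.ultrafilter_le_nhds (U.map fun i => C (φ i)) (by
    refine le_principal_iff.2
      (Ultrafilter.mem_map.2 (Eventually.of_forall fun i => hK' ⟨φ i, ?_, rfl⟩))
    simpa using hφ i)
  have hl' : Tendsto (fun i => C (φ i)) U (𝓝 l) := hl
  have hlC : l = C ψ := ext_inner_right ℂ fun y => by
    refine tendsto_nhds_unique (hl'.inner tendsto_const_nhds) ?_
    simpa only [adjoint_inner_right] using hψ (adjoint C y)
  subst hlC
  have h0 : Tendsto (fun i => ⟪φ i, C (φ i) - C ψ⟫_ℂ) U (𝓝 0) := by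
    have h1 : Tendsto (fun i => r * ‖C (φ i) - C ψ‖) U (𝓝 0) := by
      have := (tendsto_iff_norm_sub_tendsto_zero.1 hl').const_mul r
      simpa using this
    refine squeeze_zero_norm (fun i => ?_) h1
    exact (norm_inner_le_norm _ _).trans
      (mul_le_mul_of_nonneg_right (hφ i) (norm_nonneg _))
  have := h0.add (hψ (C ψ))
  simpa [← inner_add_right] using this

/-- If no `K` worked, there would be unit vectors `φ n ∈ V` with
`Re ⟪φ n, T φ n⟫ + n Im ⟪φ n, T φ n⟫ < c₀ / 2`. Then `Im ⟪φ n, C φ n⟫ → 0`, so the hypothesis on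
imaginary parts forces the weak limit of `φ n` to be `0`. Hence `⟪φ n, C φ n⟫ → 0`, whereas
coercivity of `T₀` gives `Re ⟪φ n, C φ n⟫ ≤ -c₀ / 2`. -/
lemma exists_coercive {X : Type*} [NormedAddCommGroup X] [InnerProductSpace ℂ X]
    [CompleteSpace X] (V : Submodule ℂ X) (hV : IsClosed (V : Set X))
    (T T₀ C : X →L[ℂ] X) (hsplit : T = T₀ + C) (hC : IsCompactOperator C)
    (hT₀sa : IsSelfAdjoint T₀) (c₀ : ℝ) (hc₀ : 0 < c₀)
    (hT₀ : ∀ f ∈ V, c₀ * ‖f‖ ^ 2 ≤ (⟪f, T₀ f⟫_ℂ).re)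
    (hnonneg : ∀ f ∈ V, 0 ≤ (⟪f, T f⟫_ℂ).im)
    (hIm : ∀ f ∈ V, f ≠ 0 → (⟪f, T f⟫_ℂ).im ≠ 0) :
    ∃ K : ℝ, 0 ≤ K ∧ ∀ f ∈ V,
      c₀ / 2 * ‖f‖ ^ 2 ≤ (⟪f, T f⟫_ℂ).re + K * (⟪f, T f⟫_ℂ).im := by
  have him : ∀ f, (⟪f, T f⟫_ℂ).im = (⟪f, C f⟫_ℂ).im := fun f => by
    have : (⟪f, T₀ f⟫_ℂ).im = 0 := hT₀sa.isSymmetric.im_inner_self_apply f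
    simp [hsplit, this]
  have hre : ∀ f, (⟪f, T f⟫_ℂ).re = (⟪f, T₀ f⟫_ℂ).re + (⟪f, C f⟫_ℂ).re := fun f => by
    simp [hsplit]
  by_contra! hcon
  have hunit : ∀ n : ℕ, ∃ f ∈ V, ‖f‖ = 1 ∧
      (⟪f, T f⟫_ℂ).re + n * (⟪f, T f⟫_ℂ).im < c₀ / 2 := fun n => by
    obtain ⟨f, hfV, hf⟩ := hcon n n.cast_nonneg
    have hf0 : f ≠ 0 := by rintro rfl; simp at hf
    have hpos : 0 < ‖f‖ := norm_pos_iff.2 hf0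
    refine ⟨((‖f‖⁻¹ : ℝ) : ℂ) • f, V.smul_mem _ hfV, ?_, ?_⟩
    · rw [norm_smul]; simp [hpos.ne']
    · have e : ⟪((‖f‖⁻¹ : ℝ) : ℂ) • f, T (((‖f‖⁻¹ : ℝ) : ℂ) • f)⟫_ℂ
          = (((‖f‖ ^ 2)⁻¹ : ℝ) : ℂ) * ⟪f, T f⟫_ℂ := by
        rw [map_smul, inner_smul_left, inner_smul_right, Complex.conj_ofReal]
        push_cast
        ring
      rw [e, Complex.re_ofReal_mul, Complex.im_ofReal_mul]
      have : (‖f‖ ^ 2)⁻¹ * ((⟪f, T f⟫_ℂ).re + n * (⟪f, T f⟫_ℂ).im) < c₀ / 2 := by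
        rw [inv_mul_lt_iff₀ (by positivity)]; linarith
      linarith
  choose φ hφV hφ1 hφ using hunit
  let U : Ultrafilter ℕ := hyperfilter ℕ
  obtain ⟨ψ, hψ⟩ := exists_weak_limit U φ 1 (fun n => (hφ1 n).le)
  have hlim := tendsto_inner_compact U φ 1 (fun n => (hφ1 n).le) ψ hψ C hC
  have hψV : ψ ∈ V := by
    have : CompleteSpace V := hV.completeSpace_coe
    rw [← V.orthogonal_orthogonal, Submodule.mem_orthogonal']
    intro y hy
    refine tendsto_nhds_unique (hψ y) ?_
    simp [(Submodule.mem_orthogonal _ _).1 hy _ (hφV _)]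
  have hlow : ∀ n, -‖T‖ ≤ (⟪φ n, T (φ n)⟫_ℂ).re := fun n => by
    have h1 := (Complex.abs_re_le_norm ⟪φ n, T (φ n)⟫_ℂ).trans (norm_inner_le_norm _ _)
    have h2 := T.le_opNorm (φ n)
    rw [hφ1] at h1 h2
    have := neg_abs_le (⟪φ n, T (φ n)⟫_ℂ).re
    linarith
  have hzero : Tendsto (fun n => (⟪φ n, C (φ n)⟫_ℂ).im) U (𝓝 0) := by
    have h1 : Tendsto (fun n : ℕ => (‖T‖ + c₀ / 2) / (n : ℝ)) U (𝓝 0) :=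
      (tendsto_const_div_atTop_nhds_zero_nat _).mono_left Nat.hyperfilter_le_atTop
    have hU : ∀ᶠ n : ℕ in (U : Filter ℕ), 0 < n :=
      Nat.hyperfilter_le_atTop (eventually_gt_atTop 0)
    refine tendsto_of_tendsto_of_tendsto_of_le_of_le' tendsto_const_nhds h1
      (Eventually.of_forall fun n => him (φ n) ▸ hnonneg _ (hφV n)) ?_
    filter_upwards [hU] with n hn
    rw [le_div_iff₀ (by exact_mod_cast hn), ← him]
    have := hφ n
    have := hlow n
    linarith
  have hψ0 : ψ = 0 := by
    by_contra hne
    refine hIm ψ hψV hne ?_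
    rw [him]
    exact tendsto_nhds_unique ((Complex.continuous_im.tendsto _).comp hlim) hzero
  have hbound : ∀ n, (⟪φ n, C (φ n)⟫_ℂ).re ≤ -(c₀ / 2) := fun n => by
    have h1 := hT₀ _ (hφV n)
    have h2 := hφ n
    have h3 := mul_nonneg (n.cast_nonneg (α := ℝ)) (hnonneg _ (hφV n))
    rw [hre] at h2
    rw [hφ1] at h1
    linarith
  have := le_of_tendsto ((Complex.continuous_re.tendsto _).comp hlim)
    (Eventually.of_forall hbound)
  simp [hψ0] at this
  linarith

section
variable {E : Type*} [CStarAlgebra E] [PartialOrder E] [StarOrderedRing E]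

/-- Holds because the square of the right-hand side exceeds `R² + J²` by
`2 (2K + 1) (R + K J) J + 2K J²`, a sum of products of commuting positive elements. -/
lemma sqrt_le_of_commute (R J : E) (hRJ : Commute R J) (K : ℝ) (hK : 0 ≤ K)
    (hJ : 0 ≤ J) (hG : 0 ≤ R + K • J) :
    CFC.sqrt (R * R + J * J) ≤ R + (2 * K + 1) • J := by
  have hM : 0 ≤ R + (2 * K + 1) • J := by
    have : R + (2 * K + 1) • J = (R + K • J) + (K + 1) • J := by module
    rw [this]
    exact add_nonneg hG (smul_nonneg (by positivity) hJ)
  rw [← CFC.sqrt_mul_self (R + (2 * K + 1) • J) hM]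
  refine CFC.sqrt_le_sqrt _ _ (sub_nonneg.1 ?_)
  have hGJ : 0 ≤ (R + K • J) * J :=
    Commute.mul_nonneg hG hJ (hRJ.add_left ((Commute.refl J).smul_left K))
  have hJJ : 0 ≤ J * J := Commute.mul_nonneg hJ hJ rfl
  have : (R + (2 * K + 1) • J) * (R + (2 * K + 1) • J) - (R * R + J * J)
      = (2 * (2 * K + 1)) • ((R + K • J) * J) + (2 * K) • (J * J) := by
    simp only [add_mul, mul_add, smul_mul_assoc, mul_smul_comm, ← hRJ.eq]
    module
  rw [this]
  exact add_nonneg (smul_nonneg (by positivity) hGJ) (smul_nonneg (by positivity) hJJ)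

/-- Holds because `(1 + K)² (R² + J²) - (R + K J)² = 2K (R² + J²) + (K R - J)²`. -/
lemma le_sqrt_of_commute (R J : E) (hRJ : Commute R J) (hR : IsSelfAdjoint R)
    (hJ : IsSelfAdjoint J) (K : ℝ) (hK : 0 ≤ K) (hG : 0 ≤ R + K • J) :
    R + K • J ≤ (1 + K) • CFC.sqrt (R * R + J * J) := by
  have hRR : 0 ≤ R * R := hR.mul_self_nonneg
  have hJJ : 0 ≤ J * J := hJ.mul_self_nonneg
  have hN := CFC.sqrt_mul_sqrt_self (R * R + J * J) (add_nonneg hRR hJJ)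
  rw [← CFC.sqrt_mul_self (R + K • J) hG,
    ← CFC.sqrt_mul_self ((1 + K) • CFC.sqrt (R * R + J * J))
      (smul_nonneg (by positivity) (CFC.sqrt_nonneg _))]
  refine CFC.sqrt_le_sqrt _ _ (sub_nonneg.1 ?_)
  have hD : 0 ≤ (K • R - J) * (K • R - J) :=
    IsSelfAdjoint.mul_self_nonneg (((IsSelfAdjoint.all K).smul hR).sub hJ)
  rw [smul_mul_smul_comm, hN]
  have : ((1 + K) * (1 + K)) • (R * R + J * J) - (R + K • J) * (R + K • J)
      = (2 * K) • (R * R + J * J) + (K • R - J) * (K • R - J) := by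
    simp only [add_mul, mul_add, sub_mul, mul_sub, smul_mul_assoc, mul_smul_comm, ← hRJ.eq]
    module
  rw [this]
  exact add_nonneg (smul_nonneg (by positivity) (add_nonneg hRR hJJ)) hD
end

lemma re_inner_realPart {H : Type*} [NormedAddCommGroup H] [InnerProductSpace ℂ H]
    [CompleteSpace H] (F : H →L[ℂ] H) (x : H) :
    (⟪x, (ℜ F : H →L[ℂ] H) x⟫_ℂ).re = (⟪x, F x⟫_ℂ).re := by
  have h : (⟪x, (ℑ F : H →L[ℂ] H) x⟫_ℂ).im = 0 :=
    (ℑ F).2.isSymmetric.im_inner_self_apply x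
  conv_rhs => rw [← realPart_add_I_smul_imaginaryPart F]
  simp [h]

lemma re_inner_imaginaryPart {H : Type*} [NormedAddCommGroup H] [InnerProductSpace ℂ H]
    [CompleteSpace H] (F : H →L[ℂ] H) (x : H) :
    (⟪x, (ℑ F : H →L[ℂ] H) x⟫_ℂ).re = (⟪x, F x⟫_ℂ).im := by
  have h : (⟪x, (ℜ F : H →L[ℂ] H) x⟫_ℂ).im = 0 :=
    (ℜ F).2.isSymmetric.im_inner_self_apply x
  conv_rhs => rw [← realPart_add_I_smul_imaginaryPart F]
  simp [h]

/-- **Range identity of the factorization method (Theorem on `A(X) = |F|^{1/2}(H)`).**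
Let `F = A ∘ T ∘ A†` with `F` compact and injective, `I + iγF` unitary for some `γ > 0`,
`T` coercive on the closure of the range of `A†`, `T = T₀ + C` with `C` compact and `T₀`
self-adjoint and coercive on the closure of the range of `A†`, and
`Im ⟨T φ, φ⟩ ≠ 0` for every nonzero `φ` in the closure of the range of `A†`.
Then `range A = range (F†F)^{1/4}`, the positive fourth root being taken in the sense of
the continuous functional calculus (`CFC.sqrt (CFC.sqrt (F† F))`).
(The paper's inner product `⟨·,·⟩` is linear in the *first* argument, so
`⟨a, b⟩ = ⟪b, a⟫_ℂ` in Mathlib's convention.) -/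
theorem range_eq_range_fourthRoot
    {X H : Type*} [NormedAddCommGroup X] [InnerProductSpace ℂ X] [CompleteSpace X]
    [NormedAddCommGroup H] [InnerProductSpace ℂ H] [CompleteSpace H]
    (A : X →L[ℂ] H) (T : X →L[ℂ] X)
    (F : H →L[ℂ] H) (hF : F = A.comp (T.comp (adjoint A)))
    (hFcompact : IsCompactOperator (⇑F)) (hFinj : Function.Injective (⇑F))
    (γ : ℝ) (hγ : 0 < γ)
    (hunitary : (1 + ((γ : ℂ) * Complex.I) • F) ∈ unitary (H →L[ℂ] H))
    (c : ℝ) (hc : 0 < c)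
    (hcoer : ∀ f ∈ closure (Set.range (adjoint A)), c * ‖f‖ ^ 2 ≤ ‖⟪f, T f⟫_ℂ‖)
    (T₀ C : X →L[ℂ] X) (hsplit : T = T₀ + C) (hCcompact : IsCompactOperator (⇑C))
    (hT₀sa : IsSelfAdjoint T₀)
    (c₀ : ℝ) (hc₀ : 0 < c₀)
    (hT₀coer : ∀ f ∈ closure (Set.range (adjoint A)),
      c₀ * ‖f‖ ^ 2 ≤ (⟪f, T₀ f⟫_ℂ).re)
    (hIm : ∀ φ ∈ closure (Set.range (adjoint A)), φ ≠ 0 → (⟪φ, T φ⟫_ℂ).im ≠ 0) :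
    Set.range A = Set.range ⇑(CFC.sqrt (CFC.sqrt ((adjoint F).comp F)) : H →L[ℂ] H) := by
  have hz : (γ : ℂ) * Complex.I ≠ 0 := by simp [hγ.ne']
  have hnormal : IsStarNormal F := by
    set z : ℂ := (γ : ℂ) * Complex.I
    have h1 : Commute (star (1 + z • F)) (1 + z • F) := by
      rw [commute_iff_eq, Unitary.star_mul_self_of_mem hunitary,
        Unitary.mul_star_self_of_mem hunitary]
    have h2 : Commute (star (z • F)) (z • F) := by
      have := (h1.sub_left (Commute.one_left _)).sub_right (Commute.one_right _)
      simpa using this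
    refine ⟨?_⟩
    rw [star_smul] at h2
    simpa [hz, smul_smul] using (h2.smul_left (star z)⁻¹).smul_right z⁻¹
  have hform : ∀ x, ⟪x, F x⟫_ℂ = ⟪adjoint A x, T (adjoint A x)⟫_ℂ := fun x => by
    rw [hF]; simp [adjoint_inner_left]
  have hFim : ∀ x, (⟪x, F x⟫_ℂ).im = γ / 2 * ‖F x‖ ^ 2 := fun x => by
    have h1 : ‖x + ((γ : ℂ) * Complex.I) • F x‖ = ‖x‖ :=
      ContinuousLinearMap.norm_map_of_mem_unitary hunitary x
    have h2 := norm_add_sq (𝕜 := ℂ) x (((γ : ℂ) * Complex.I) • F x)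
    rw [h1, norm_smul, inner_smul_right] at h2
    simp [abs_of_pos hγ, mul_assoc] at h2
    have : γ * (γ / 2 * ‖F x‖ ^ 2 - (⟪x, F x⟫_ℂ).im) = 0 := by linarith
    have := (mul_eq_zero.1 this).resolve_left hγ.ne'
    linarith
  let V : Submodule ℂ X := (LinearMap.range (adjoint A).toLinearMap).topologicalClosure
  have hTim : ∀ f ∈ V, 0 ≤ (⟪f, T f⟫_ℂ).im := fun f hf => by
    have hclosed : IsClosed {f : X | 0 ≤ (⟪f, T f⟫_ℂ).im} :=
      isClosed_le continuous_const (by fun_prop)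
    refine closure_minimal ?_ hclosed hf
    rintro _ ⟨x, rfl⟩
    change 0 ≤ (⟪adjoint A x, T (adjoint A x)⟫_ℂ).im
    rw [← hform, hFim]
    positivity
  obtain ⟨K, hK, hKV⟩ := exists_coercive V (Submodule.isClosed_topologicalClosure _)
    T T₀ C hsplit hCcompact hT₀sa c₀ hc₀ hT₀coer hTim hIm
  set R : H →L[ℂ] H := (ℜ F : H →L[ℂ] H) with hR
  set J : H →L[ℂ] H := (ℑ F : H →L[ℂ] H) with hJ
  have hRsa : IsSelfAdjoint R := (ℜ F).2
  have hJsa : IsSelfAdjoint J := (ℑ F).2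
  have hRJ : Commute R J := isStarNormal_iff_commute_realPart_imaginaryPart.1 hnormal
  have hFF : (adjoint F).comp F = R * R + J * J :=
    star_mul_self_eq_realPart_sq_add_imaginaryPart_sq F
  have hRe : ∀ x, (⟪x, R x⟫_ℂ).re = (⟪x, F x⟫_ℂ).re := re_inner_realPart F
  have hJe : ∀ x, (⟪x, J x⟫_ℂ).re = (⟪x, F x⟫_ℂ).im := re_inner_imaginaryPart F
  have hcomb : ∀ (k : ℝ) x, (⟪x, (R + k • J) x⟫_ℂ).re
      = (⟪adjoint A x, T (adjoint A x)⟫_ℂ).re + k * (⟪adjoint A x, T (adjoint A x)⟫_ℂ).im :=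
    fun k x => by
      rw [← hform, ← hRe, ← hJe]
      simp [inner_smul_right_eq_smul]
  have hmem : ∀ x, adjoint A x ∈ V := fun x => subset_closure ⟨x, rfl⟩
  have hJpos : 0 ≤ J := by
    rw [nonneg_iff_isPositive, isPositive_def']
    refine ⟨hJsa, fun x => ?_⟩
    rw [reApplyInnerSelf_apply, inner_re_symm]
    change 0 ≤ (⟪x, J x⟫_ℂ).re
    rw [hJe, hFim]
    positivity
  have hGpos : 0 ≤ R + K • J := by
    rw [nonneg_iff_isPositive, isPositive_def']
    refine ⟨hRsa.add ((IsSelfAdjoint.all K).smul hJsa), fun x => ?_⟩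
    rw [reApplyInnerSelf_apply, inner_re_symm]
    change 0 ≤ (⟪x, (R + K • J) x⟫_ℂ).re
    rw [hcomb]
    exact le_trans (by positivity) (hKV _ (hmem x))
  have hmono : ∀ S S' : H →L[ℂ] H, S ≤ S' → ∀ x, (⟪x, S x⟫_ℂ).re ≤ (⟪x, S' x⟫_ℂ).re :=
    fun S S' h x => by
      have : 0 ≤ (⟪x, (S' - S) x⟫_ℂ).re := ((le_def S S').1 h).re_inner_nonneg_right x
      simpa [inner_sub_right] using this
  have hupper := sqrt_le_of_commute R J hRJ K hK hJpos hGpos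
  have hlower := le_sqrt_of_commute R J hRJ hRsa hJsa K hK hGpos
  rw [hFF]
  set P := CFC.sqrt (R * R + J * J) with hP
  set Q := CFC.sqrt P with hQ
  have hQsa : adjoint Q = Q := (IsSelfAdjoint.of_nonneg (CFC.sqrt_nonneg P))
  have hQQ : Q * Q = P := CFC.sqrt_mul_sqrt_self P (CFC.sqrt_nonneg _)
  have hQnorm : ∀ x, ‖Q x‖ ^ 2 = (⟪x, P x⟫_ℂ).re := fun x => by
    have h1 : ⟪x, P x⟫_ℂ = ⟪Q x, Q x⟫_ℂ := by
      rw [← hQQ, mul_apply_eq_comp, ← adjoint_inner_left, hQsa]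
    rw [h1, ← inner_self_eq_norm_sq (𝕜 := ℂ)]
    rfl
  have hpass : ∀ (a b k : ℝ), 0 ≤ a → 0 ≤ b → 0 ≤ k → a ^ 2 ≤ k * b ^ 2 → a ≤ √k * b := by
    intro a b k ha hb hk h
    refine le_of_sq_le_sq ?_ (by positivity)
    rwa [mul_pow, Real.sq_sqrt hk]
  apply Set.Subset.antisymm
  · refine range_subset_range_of_norm_adjoint_le A Q √((1 + K) * (2 / c₀)) fun x => ?_
    rw [hQsa]
    refine hpass _ _ _ (norm_nonneg _) (norm_nonneg _) (by positivity) ?_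
    have h1 := hKV _ (hmem x)
    rw [← hcomb] at h1
    have h2 := hmono _ _ hlower x
    have h3 : (⟪x, ((1 + K) • P) x⟫_ℂ).re = (1 + K) * ‖Q x‖ ^ 2 := by
      rw [hQnorm]; simp [inner_smul_right_eq_smul]
    rw [h3] at h2
    have h4 := h1.trans h2
    calc ‖adjoint A x‖ ^ 2 = 2 / c₀ * (c₀ / 2 * ‖adjoint A x‖ ^ 2) := by field_simp
      _ ≤ 2 / c₀ * ((1 + K) * ‖Q x‖ ^ 2) := by gcongr
      _ = _ := by ring
  · refine range_subset_range_of_norm_adjoint_le Q A √((2 * K + 2) * ‖T‖) fun x => ?_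
    rw [hQsa]
    refine hpass _ _ _ (norm_nonneg _) (norm_nonneg _) (by positivity) ?_
    have h1 := hmono _ _ hupper x
    rw [hcomb, ← hQnorm] at h1
    set f := adjoint A x
    have hT : ‖⟪f, T f⟫_ℂ‖ ≤ ‖T‖ * ‖f‖ ^ 2 := by
      calc _ ≤ ‖f‖ * ‖T f‖ := norm_inner_le_norm _ _
        _ ≤ ‖f‖ * (‖T‖ * ‖f‖) := by gcongr; exact T.le_opNorm f
        _ = _ := by ring
    have h2 := (Complex.re_le_norm ⟪f, T f⟫_ℂ).trans hT
    have h3 := mul_le_mul_of_nonneg_left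
      (((le_abs_self _).trans (Complex.abs_im_le_norm ⟪f, T f⟫_ℂ)).trans hT)
      (by positivity : 0 ≤ 2 * K + 1)
    calc ‖Q x‖ ^ 2 ≤ _ := h1
      _ ≤ ‖T‖ * ‖f‖ ^ 2 + (2 * K + 1) * (‖T‖ * ‖f‖ ^ 2) := add_le_add h2 h3
      _ = _ := by ring
end

section
/- Let H be a complex Hilbert space with a Hilbert basis (complete orthonormal system) (ψ_n)_{n∈ℕ}, let 0 < δ ≤ π/2, and let (s_n) be a sequence of complex numbers of the form s_n = e^{i t_n} with 0 ≤ t_n ≤ π − 2δ for all n. Let J : H → H be the bounded linear operator satisfying Jψ = Σ_n s_n ⟨ψ, ψ_n⟩ ψ_n for all ψ ∈ H. Then |⟨J ψ, ψ⟩| ≥ sin δ · ‖ψ‖² for every ψ ∈ H. -/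
/-!
Expanding `ψ` in the basis gives `⟪ψ, J ψ⟫ = ∑ s_n |⟪ψ_n, ψ⟫|²`, a combination of the phases `s_n`
with nonnegative weights of total mass `‖ψ‖²`. The phases lie on an arc symmetric about the angle
`π/2 - δ`; after rotating by `-(π/2 - δ)` their arguments have modulus at most `π/2 - δ`, so
their real parts are at least `cos (π/2 - δ) = sin δ`
(`sin_le_re_rotated_phase`). Hence the real part of the rotated sum is at least `sin δ ‖ψ‖²`, and
it is bounded above by the modulus `|⟪ψ, J ψ⟫|`.
-/

open scoped InnerProductSpace

theorem sin_le_re_rotated_phase {δ t : ℝ} (hδ₀ : 0 < δ) (ht₀ : 0 ≤ t)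
    (ht₁ : t ≤ Real.pi - 2 * δ) :
    Real.sin δ ≤ (Complex.exp (((-(Real.pi / 2 - δ) : ℝ) : ℂ) * Complex.I) *
      Complex.exp (Complex.I * (t : ℂ))).re := by
  rw [mul_comm Complex.I, ← Complex.exp_add, ← add_mul, ← Complex.ofReal_add,
    Complex.exp_ofReal_mul_I_re, ← Real.cos_pi_div_two_sub, ← Real.cos_abs (_ + t)]
  apply Real.cos_le_cos_of_nonneg_of_le_pi (abs_nonneg _)
  · linarith [Real.pi_pos]
  · rw [abs_le]
    constructor <;> linarith

/-- **Coercivity of the diagonal phase operator `J`.**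
Let `(ψ_n)` be a Hilbert basis of the complex Hilbert space `H`, `0 < δ ≤ π/2`, and
`s_n = e^{i t_n}` with `0 ≤ t_n ≤ π − 2δ`.  If `J` is the bounded operator with
`Jψ = Σ_n s_n ⟨ψ, ψ_n⟩ ψ_n`, then `|⟨Jψ, ψ⟩| ≥ sin δ · ‖ψ‖²` for all `ψ`.
(The paper's inner product `⟨·,·⟩` is linear in the *first* argument, so
`⟨ψ, ψ_n⟩ = ⟪ψ_n, ψ⟫_ℂ` and `⟨Jψ, ψ⟩ = ⟪ψ, Jψ⟫_ℂ` in Mathlib's convention.) -/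
theorem phase_operator_coercive
    {H : Type*} [NormedAddCommGroup H] [InnerProductSpace ℂ H] [CompleteSpace H]
    (b : HilbertBasis ℕ ℂ H) (δ : ℝ) (hδ₀ : 0 < δ) (hδ₁ : δ ≤ Real.pi / 2)
    (t : ℕ → ℝ) (ht₀ : ∀ n, 0 ≤ t n) (ht₁ : ∀ n, t n ≤ Real.pi - 2 * δ)
    (s : ℕ → ℂ) (hs : ∀ n, s n = Complex.exp (Complex.I * (t n : ℂ)))
    (J : H →L[ℂ] H) (hJ : ∀ ψ : H, J ψ = ∑' n, (s n * ⟪b n, ψ⟫_ℂ) • b n)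
    (ψ : H) :
    Real.sin δ * ‖ψ‖ ^ 2 ≤ ‖⟪ψ, J ψ⟫_ℂ‖ := by
  have hJb : ∀ n, J (b n) = s n • b n := by
    intro n
    rw [hJ, tsum_eq_single n]
    · simp [inner_self_eq_norm_sq_to_K, b.orthonormal.1 n]
    · intro m hm
      simp [b.orthonormal.2 hm]
  have hJψ : HasSum (fun n => s n * ((‖⟪b n, ψ⟫_ℂ‖ ^ 2 : ℝ) : ℂ)) ⟪ψ, J ψ⟫_ℂ := by
    have h := ((b.hasSum_repr ψ).mapL J).mapL (innerSL ℂ ψ)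
    simp only [map_smul, hJb, innerSL_apply_apply, smul_eq_mul, b.repr_apply_apply] at h
    refine (congrArg (HasSum · _) (funext fun n => ?_)).mp h
    rw [← inner_conj_symm ψ (b n), Complex.ofReal_pow, ← Complex.mul_conj']
    ring
  have hψ : HasSum (fun n => ‖⟪b n, ψ⟫_ℂ‖ ^ 2) (‖ψ‖ ^ 2) := by
    have h := b.hasSum_inner_mul_inner ψ ψ
    rw [inner_self_eq_norm_sq_to_K] at h
    have h' := Complex.hasSum_re h
    convert h' using 1
    · funext n
      rw [← inner_conj_symm ψ (b n), Complex.conj_mul', ← Complex.ofReal_pow, Complex.ofReal_re]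
    · exact (Complex.ofReal_re _).symm.trans (by push_cast; rfl)
  -- The rotation carries the arc of phases to one symmetric about the positive real axis.
  set w : ℂ := Complex.exp (((-(Real.pi / 2 - δ) : ℝ) : ℂ) * Complex.I) with hw
  have hwnorm : ‖w‖ = 1 := Complex.norm_exp_ofReal_mul_I _
  have hre : Real.sin δ * ‖ψ‖ ^ 2 ≤ (w * ⟪ψ, J ψ⟫_ℂ).re := by
    refine hasSum_le (fun n => ?_) (hψ.mul_left (Real.sin δ))
      (Complex.hasSum_re (hJψ.mul_left w))
    rw [← mul_assoc, Complex.re_mul_ofReal, hs n]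
    exact mul_le_mul_of_nonneg_right (sin_le_re_rotated_phase hδ₀ (ht₀ n) (ht₁ n)) (sq_nonneg _)
  calc Real.sin δ * ‖ψ‖ ^ 2 ≤ (w * ⟪ψ, J ψ⟫_ℂ).re := hre
    _ ≤ ‖w * ⟪ψ, J ψ⟫_ℂ‖ := Complex.re_le_norm _
    _ = ‖⟪ψ, J ψ⟫_ℂ‖ := by rw [norm_mul, hwnorm, one_mul]
end

section
/- Let H be a complex Hilbert space with a Hilbert basis (complete orthonormal system) (ψ_n)_{n∈ℕ}, let (λ_n) be a bounded sequence of nonzero complex numbers, and let S : H → H be the bounded linear operator satisfying S ψ_n = sqrt(|λ_n|) ψ_n for all n. Then for every φ ∈ H, φ belongs to the range of S if and only if Σ_n |⟨φ, ψ_n⟩|² / |λ_n| < ∞. -/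
/-!
In the coordinates given by the Hilbert basis, `S` is multiplication by `√|λ_n|`
(`inner_diagonal_apply`), and the coordinate sequences of vectors are exactly the elements of `ℓ²`.
Hence `φ = S x` forces `⟪b n, x⟫ = ⟪b n, φ⟫ / √|λ_n|`, and such an `x` exists iff this sequence is
square summable, i.e. iff `∑ |⟪b n, φ⟫|² / |λ_n|` converges.
-/

open scoped InnerProductSpace

/-- A bounded operator that is diagonal on a Hilbert basis acts on coordinates by multiplication:
both sides are continuous and linear in `x` and agree on the basis, whose span is dense. -/
theorem inner_diagonal_apply {H : Type*} [NormedAddCommGroup H] [InnerProductSpace ℂ H]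
    (b : HilbertBasis ℕ ℂ H) {c : ℕ → ℂ} {S : H →L[ℂ] H} (hS : ∀ n, S (b n) = c n • b n)
    (x : H) (n : ℕ) : ⟪b n, S x⟫_ℂ = c n * ⟪b n, x⟫_ℂ := by
  have key : (innerSL ℂ (b n)).comp S = c n • innerSL ℂ (b n) := by
    refine ContinuousLinearMap.ext_on
      (Submodule.dense_iff_topologicalClosure_eq_top.2 b.dense_span) ?_
    rintro _ ⟨m, rfl⟩
    have hb := orthonormal_iff_ite.1 b.orthonormal n m
    by_cases h : n = m
    · subst h
      simp [hS]
    · simp [hS, hb, h]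
  simpa using DFunLike.congr_fun key x

theorem summable_sq_norm_inner {H : Type*} [NormedAddCommGroup H] [InnerProductSpace ℂ H]
    (b : HilbertBasis ℕ ℂ H) (x : H) : Summable fun n => ‖⟪b n, x⟫_ℂ‖ ^ 2 := by
  refine ((lp.memℓp (b.repr x)).summable (by norm_num)).congr fun n => ?_
  rw [ENNReal.toReal_ofNat, Real.rpow_two, b.repr_apply_apply]

/-- **Picard-type range criterion for the diagonal operator `S ψ_n = √|λ_n| ψ_n`.**
Let `(ψ_n)` be a Hilbert basis of `H`, `(λ_n)` a bounded sequence of nonzero complex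
numbers, and `S` the bounded operator with `S ψ_n = √|λ_n| ψ_n`.  Then `φ` lies in the
range of `S` iff `Σ_n |⟨φ, ψ_n⟩|²/|λ_n| < ∞`.
(The paper's inner product `⟨·,·⟩` is linear in the *first* argument, so
`⟨φ, ψ_n⟩ = ⟪ψ_n, φ⟫_ℂ` in Mathlib's convention.) -/
theorem mem_range_diagonal_sqrt_iff_summable
    {H : Type*} [NormedAddCommGroup H] [InnerProductSpace ℂ H] [CompleteSpace H]
    (b : HilbertBasis ℕ ℂ H) (l : ℕ → ℂ)
    (hbdd : ∃ M : ℝ, ∀ n, ‖l n‖ ≤ M) (hne : ∀ n, l n ≠ 0)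
    (S : H →L[ℂ] H) (hS : ∀ n, S (b n) = ((Real.sqrt ‖l n‖ : ℝ) : ℂ) • b n)
    (φ : H) :
    φ ∈ Set.range S ↔ Summable (fun n : ℕ => ‖⟪b n, φ⟫_ℂ‖ ^ 2 / ‖l n‖) := by
  have hpos : ∀ n, 0 < ‖l n‖ := fun n => norm_pos_iff.2 (hne n)
  constructor
  · rintro ⟨x, rfl⟩
    refine (summable_sq_norm_inner b x).congr fun n => ?_
    rw [inner_diagonal_apply b hS, norm_mul, Complex.norm_real, Real.norm_eq_abs, mul_pow,
      sq_abs, Real.sq_sqrt (hpos n).le, mul_div_cancel_left₀ _ (hpos n).ne']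
  · intro h
    -- The coefficients of the preimage of `φ`.
    have hmem : Memℓp (fun n => ⟪b n, φ⟫_ℂ / ((Real.sqrt ‖l n‖ : ℝ) : ℂ)) 2 := by
      refine memℓp_gen (h.congr fun n => ?_)
      rw [ENNReal.toReal_ofNat, Real.rpow_two, norm_div, Complex.norm_real, Real.norm_eq_abs,
        div_pow, sq_abs, Real.sq_sqrt (hpos n).le]
    refine ⟨b.repr.symm ⟨_, hmem⟩, b.repr.injective (lp.ext (funext fun n => ?_))⟩
    rw [b.repr_apply_apply, b.repr_apply_apply, inner_diagonal_apply b hS,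
      ← b.repr_apply_apply, LinearIsometryEquiv.apply_symm_apply]
    exact mul_div_cancel₀ _ (Complex.ofReal_ne_zero.2 (Real.sqrt_pos.2 (hpos n)).ne')
end

section
/- Let D ⊂ ℝ² be a bounded open set and let B ⊂ ℝ² be a bounded set. Then there exist constants C > 0 and E > 0 (depending only on D and B) such that for every z ∈ B with z ∉ closure(D), ∫_D ( 1/|x − z|² + (ln |x − z|)² ) dx ≤ C |ln dist(z, D)| + E, where the integral is with respect to two-dimensional Lebesgue measure and dist(z, D) = inf{ |z − x| : x ∈ D }. In particular the squared H¹(D)-norm of the fundamental solution Φ₀(x, z) = (1/2π) ln(1/|x − z|) of the Laplace equation, namely ∫_D ( |Φ₀(x,z)|² + |∇_x Φ₀(x,z)|² ) dx, is bounded by C' |ln dist(z, D)| + E' for suitable constants C', E' > 0. -/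
open MeasureTheory

/-!
Write `d = dist(z, D) > 0` and choose `R ≥ 1` with `D ⊆ {x | |x - z| ≤ R}` for all `z ∈ B`.
Since `|log r| ≤ max r r⁻¹`, the integrand `r⁻² + (log r)²` is at most `2 r⁻² + R²` for
`0 < r ≤ R` (`log_integrand_le`), and `D` lies in the annulus `d ≤ |x - z| ≤ R`. In polar
coordinates the integral of the majorant over that annulus is a multiple of
`∫_d^R (2 / r + R² r) dr ≤ 2 (log R - log d) + R⁴`, which grows like `|log d|`
(`setIntegral_le_of_le_majorant`). The squared `H¹` integrand is `(1 / 2π)²` times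
`r⁻² + (log r)²`, so the same bound covers it.
-/

lemma log_integrand_le {r R : ℝ} (hr : 0 < r) (hrR : r ≤ R) :
    1 / r ^ 2 + Real.log r ^ 2 ≤ 2 / r ^ 2 + R ^ 2 := by
  have h1 : Real.log r ≤ r := (Real.log_le_sub_one_of_pos hr).trans (by linarith)
  have h2 : -Real.log r ≤ 1 / r := by
    have := Real.log_le_sub_one_of_pos (inv_pos.2 hr)
    rw [Real.log_inv] at this
    rw [one_div]
    linarith
  have h3 : 0 < 1 / r := by positivity
  have h4 : Real.log r ^ 2 ≤ (1 / r) ^ 2 + r ^ 2 := by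
    rcases le_total 0 (Real.log r) with h | h
    · nlinarith [pow_le_pow_left₀ h h1 2]
    · nlinarith [pow_le_pow_left₀ (neg_nonneg.2 h) h2 2]
  have h5 : r ^ 2 ≤ R ^ 2 := pow_le_pow_left₀ hr.le hrR 2
  have h6 : 2 / r ^ 2 = 1 / r ^ 2 + (1 / r) ^ 2 := by
    field_simp
    norm_num
  linarith

/-- The radial part of the integral of the majorant `2 / r² + R²` over the annulus
`d ≤ r ≤ R`. -/
lemma radial_integral_le {d R : ℝ} (hd : 0 < d) (hdR : d ≤ R) :
    IntegrableOn (fun y : ℝ ↦ y ^ (2 - 1) •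
      (Set.Icc d R).indicator (fun y : ℝ ↦ 2 / y ^ 2 + R ^ 2) y) (Set.Ioi 0) ∧
    ∫ y in Set.Ioi (0 : ℝ), y ^ (2 - 1) •
      (Set.Icc d R).indicator (fun y : ℝ ↦ 2 / y ^ 2 + R ^ 2) y
      ≤ 2 * (Real.log R - Real.log d) + R ^ 4 := by
  have hR : 0 < R := hd.trans_le hdR
  have hsub : Set.Icc d R ⊆ Set.Ioi 0 := fun y hy ↦ hd.trans_le hy.1
  have heq : (fun y : ℝ ↦ y ^ (2 - 1) •
      (Set.Icc d R).indicator (fun y : ℝ ↦ 2 / y ^ 2 + R ^ 2) y) =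
      (Set.Icc d R).indicator (fun y : ℝ ↦ 2 * y⁻¹ + R ^ 2 * y) := by
    funext y
    by_cases hy : y ∈ Set.Icc d R
    · have : 0 < y := hsub hy
      simp only [Set.indicator_of_mem hy, smul_eq_mul]
      norm_num
      field_simp
    · simp [Set.indicator_of_notMem hy]
  have hcont : ContinuousOn (fun y : ℝ ↦ 2 * y⁻¹ + R ^ 2 * y) (Set.Icc d R) := by
    refine ContinuousOn.add (ContinuousOn.mul continuousOn_const ?_) (by fun_prop)
    exact continuousOn_id.inv₀ fun y hy ↦ (hsub hy : 0 < y).ne'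
  have hint : IntegrableOn (fun y : ℝ ↦ 2 * y⁻¹ + R ^ 2 * y) (Set.Icc d R) :=
    hcont.integrableOn_compact isCompact_Icc
  rw [heq]
  refine ⟨((integrable_indicator_iff measurableSet_Icc).2 hint).integrableOn, ?_⟩
  rw [setIntegral_indicator measurableSet_Icc, Set.inter_eq_self_of_subset_right hsub,
    integral_Icc_eq_integral_Ioc, ← intervalIntegral.integral_of_le hdR,
    intervalIntegral.integral_add, intervalIntegral.integral_const_mul,
    intervalIntegral.integral_const_mul, integral_inv_of_pos hd hR, integral_id,
    Real.log_div hR.ne' hd.ne']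
  · nlinarith [sq_nonneg (R * d), sq_nonneg (R ^ 2)]
  · refine ContinuousOn.intervalIntegrable ?_
    rw [Set.uIcc_of_le hdR]
    exact continuousOn_const.mul (continuousOn_id.inv₀ fun y hy ↦ (hsub hy : 0 < y).ne')
  · exact Continuous.intervalIntegrable (by fun_prop) _ _

/-- Bounds the integral over `D` by that of the radial majorant over the annulus
`d ≤ |x - z| ≤ R`, evaluated in polar coordinates centred at `z`. -/
lemma setIntegral_le_of_le_majorant {D : Set (EuclideanSpace ℝ (Fin 2))} (hD : MeasurableSet D)
    {z : EuclideanSpace ℝ (Fin 2)} {d R : ℝ} (hd : 0 < d) (hdR : d ≤ R)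
    (hmem : ∀ x ∈ D, ‖x - z‖ ∈ Set.Icc d R) {f : EuclideanSpace ℝ (Fin 2) → ℝ}
    (hf0 : ∀ x ∈ D, 0 ≤ f x) (hf : ∀ x ∈ D, f x ≤ 2 / ‖x - z‖ ^ 2 + R ^ 2) :
    ∫ x in D, f x ≤ 2 * (volume.real (Metric.ball (0 : EuclideanSpace ℝ (Fin 2)) 1) *
      (2 * (Real.log R - Real.log d) + R ^ 4)) := by
  obtain ⟨hint, hle⟩ := radial_integral_le hd hdR
  set F : ℝ → ℝ := (Set.Icc d R).indicator (fun y : ℝ ↦ 2 / y ^ 2 + R ^ 2) with hF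
  have hdim : Module.finrank ℝ (EuclideanSpace ℝ (Fin 2)) = 2 := by simp
  have hFint : Integrable (fun x : EuclideanSpace ℝ (Fin 2) ↦ F ‖x‖) := by
    rw [integrable_fun_norm_addHaar volume, hdim]
    exact hint
  have hFz : Integrable (fun x : EuclideanSpace ℝ (Fin 2) ↦ F ‖x - z‖) :=
    hFint.comp_sub_right z
  have hF0 : ∀ y, 0 ≤ F y := fun y ↦ Set.indicator_nonneg (fun y _ ↦ by positivity) y
  calc ∫ x in D, f x = ∫ x, D.indicator f x := (integral_indicator hD).symm
    _ ≤ ∫ x, F ‖x - z‖ := by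
      refine integral_mono_of_nonneg (.of_forall fun x ↦ Set.indicator_nonneg hf0 x) hFz
        (.of_forall fun x ↦ ?_)
      by_cases hx : x ∈ D
      · simpa only [hF, Set.indicator_of_mem hx, Set.indicator_of_mem (hmem x hx)] using hf x hx
      · simpa only [Set.indicator_of_notMem hx] using hF0 _
    _ = ∫ x : EuclideanSpace ℝ (Fin 2), F ‖x‖ :=
      integral_sub_right_eq_self (fun x : EuclideanSpace ℝ (Fin 2) ↦ F ‖x‖) z
    _ ≤ _ := by
      rw [integral_fun_norm_addHaar volume, hdim]
      simp only [nsmul_eq_mul, smul_eq_mul, Nat.cast_ofNat] at hle ⊢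
      gcongr


/-- **Logarithmic bound for the `H¹(D)`-norm of the Laplace fundamental solution
(Lemma on `‖Φ₀(·,z)‖²_{H¹(D)} ≤ C|ln d(z,D)| + E`).**
Let `D ⊂ ℝ²` be bounded and open and `B ⊂ ℝ²` bounded.  There are constants
`C, E > 0` (and `C', E' > 0`) such that for every `z ∈ B` with `z ∉ closure D`,
`∫_D (1/|x−z|² + (ln|x−z|)²) dx ≤ C|ln dist(z,D)| + E`, and the squared `H¹(D)`-norm of
`Φ₀(x,z) = (1/2π) ln(1/|x−z|)` (whose gradient is `−(1/2π)(x−z)/|x−z|²`) satisfies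
`∫_D (|Φ₀|² + |∇ₓΦ₀|²) dx ≤ C'|ln dist(z,D)| + E'`. -/
theorem fundamental_solution_H1_log_bound
    (D B : Set (EuclideanSpace ℝ (Fin 2)))
    (hDopen : IsOpen D) (hDbdd : Bornology.IsBounded D)
    (hBbdd : Bornology.IsBounded B) :
    ∃ C E C' E' : ℝ, 0 < C ∧ 0 < E ∧ 0 < C' ∧ 0 < E' ∧
      ∀ z ∈ B, z ∉ closure D →
        (∫ x in D, (1 / ‖x - z‖ ^ 2 + Real.log ‖x - z‖ ^ 2)) ≤
            C * |Real.log (Metric.infDist z D)| + E ∧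
        (∫ x in D, ((1 / (2 * Real.pi) * Real.log (1 / ‖x - z‖)) ^ 2 +
            ‖(-(1 / (2 * Real.pi)) / ‖x - z‖ ^ 2) • (x - z)‖ ^ 2)) ≤
          C' * |Real.log (Metric.infDist z D)| + E' := by
  obtain ⟨M, hM⟩ := hDbdd.exists_norm_le
  obtain ⟨N, hN⟩ := hBbdd.exists_norm_le
  set R : ℝ := max 1 (M + N) with hR
  have hR1 : 1 ≤ R := le_max_left _ _
  have hlogR : 0 ≤ Real.log R := Real.log_nonneg hR1
  set V : ℝ := volume.real (Metric.ball (0 : EuclideanSpace ℝ (Fin 2)) 1) with hV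
  have hV0 : 0 ≤ V := measureReal_nonneg
  -- The `+ 1` only makes the constants positive without computing `V = π`.
  have hC : 0 < 4 * V + 1 := by positivity
  have hE : 0 < 2 * (V * (2 * Real.log R + R ^ 4)) + 1 := by positivity
  refine ⟨4 * V + 1, 2 * (V * (2 * Real.log R + R ^ 4)) + 1, 4 * V + 1,
    2 * (V * (2 * Real.log R + R ^ 4)) + 1, hC, hE, hC, hE, fun z hzB hzD ↦ ?_⟩
  rcases D.eq_empty_or_nonempty with rfl | hne
  · simp only [Measure.restrict_empty, integral_zero_measure]
    constructor <;> positivity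
  set d := Metric.infDist z D with hd_def
  have hd : 0 < d := (Metric.infDist_pos_iff_notMem_closure hne).1 hzD
  have hmem : ∀ x ∈ D, ‖x - z‖ ∈ Set.Icc d R := fun x hx ↦ by
    constructor
    · rw [← dist_eq_norm, dist_comm]
      exact Metric.infDist_le_dist_of_mem hx
    · exact (norm_sub_le x z).trans ((add_le_add (hM x hx) (hN z hzB)).trans (le_max_right _ _))
  have hdR : d ≤ R := by
    obtain ⟨x, hx⟩ := hne
    exact (hmem x hx).1.trans (hmem x hx).2
  have hpos : ∀ x ∈ D, 0 < ‖x - z‖ := fun x hx ↦ hd.trans_le (hmem x hx).1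
  have hfinal : 2 * (V * (2 * (Real.log R - Real.log d) + R ^ 4)) ≤
      (4 * V + 1) * |Real.log d| + (2 * (V * (2 * Real.log R + R ^ 4)) + 1) := by
    have h1 : V * -Real.log d ≤ V * |Real.log d| :=
      mul_le_mul_of_nonneg_left (neg_le_abs _) hV0
    nlinarith [abs_nonneg (Real.log d)]
  constructor
  · refine (setIntegral_le_of_le_majorant hDopen.measurableSet hd hdR hmem
      (fun x _ ↦ by positivity) fun x hx ↦ ?_).trans hfinal
    exact log_integrand_le (hpos x hx) (hmem x hx).2
  · refine (setIntegral_le_of_le_majorant hDopen.measurableSet hd hdR hmem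
      (fun x _ ↦ by positivity) fun x hx ↦ ?_).trans hfinal
    refine le_trans ?_ (log_integrand_le (hpos x hx) (hmem x hx).2)
    have hr := hpos x hx
    have hpi : 0 < 2 * Real.pi := by positivity
    have hk : (1 / (2 * Real.pi)) ^ 2 ≤ 1 := by
      refine pow_le_one₀ (by positivity) ?_
      rw [div_le_one hpi]
      linarith [Real.pi_gt_three]
    have heq : (1 / (2 * Real.pi) * Real.log (1 / ‖x - z‖)) ^ 2 +
        ‖(-(1 / (2 * Real.pi)) / ‖x - z‖ ^ 2) • (x - z)‖ ^ 2 =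
        (1 / (2 * Real.pi)) ^ 2 * (1 / ‖x - z‖ ^ 2 + Real.log ‖x - z‖ ^ 2) := by
      rw [norm_smul, mul_pow, mul_pow, Real.norm_eq_abs, sq_abs, one_div ‖x - z‖, Real.log_inv]
      field_simp
      ring
    rw [heq]
    exact mul_le_of_le_one_left (by positivity) hk
end

section
/- Let H be a complex Hilbert space, let F : H → H be a bounded linear operator with adjoint F†, and suppose there exists a real constant c > 0 such that F − F† = i c (F† ∘ F). Then for every φ ∈ H, the imaginary part of ⟨F φ, φ⟩ equals (c/2) ‖F φ‖², and consequently (c/2) ‖F φ‖² ≤ |⟨F φ, φ⟩| ≤ ‖φ‖ · ‖F φ‖. In particular, the two indicator quantities W₁(φ) = |⟨F φ, φ⟩| and W₂(φ) = ‖F φ‖ satisfy (c/2) W₂(φ)² ≤ W₁(φ) ≤ ‖φ‖ W₂(φ). -/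
open ContinuousLinearMap
open scoped InnerProductSpace

/-- **Comparison of the sampling indicators `W₁` and `W₂` (from identity (9.5)).**
Let `F` be a bounded operator on a complex Hilbert space with `F − F† = i c F†F` for
some real `c > 0`.  Then for every `φ`, `Im⟨Fφ, φ⟩ = (c/2)‖Fφ‖²`, and hence
`(c/2)‖Fφ‖² ≤ |⟨Fφ, φ⟩| ≤ ‖φ‖‖Fφ‖`, i.e. the indicators `W₁(φ) = |⟨Fφ, φ⟩|` and
`W₂(φ) = ‖Fφ‖` satisfy `(c/2)W₂(φ)² ≤ W₁(φ) ≤ ‖φ‖ W₂(φ)`.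
(The paper's inner product `⟨·,·⟩` is linear in the *first* argument, so
`⟨Fφ, φ⟩ = ⟪φ, Fφ⟫_ℂ` in Mathlib's convention.) -/
theorem indicator_comparison_of_farField_identity
    {H : Type*} [NormedAddCommGroup H] [InnerProductSpace ℂ H] [CompleteSpace H]
    (F : H →L[ℂ] H) (c : ℝ) (hc : 0 < c)
    (hid : F - adjoint F = (Complex.I * (c : ℂ)) • ((adjoint F).comp F))
    (φ : H) :
    (⟪φ, F φ⟫_ℂ).im = c / 2 * ‖F φ‖ ^ 2 ∧
      c / 2 * ‖F φ‖ ^ 2 ≤ ‖⟪φ, F φ⟫_ℂ‖ ∧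
      ‖⟪φ, F φ⟫_ℂ‖ ≤ ‖φ‖ * ‖F φ‖ := by
  have him : (⟪φ, F φ⟫_ℂ).im = c / 2 * ‖F φ‖ ^ 2 := by
    -- Pair the operator identity with `φ`: the left side is `⟪φ, F φ⟫` minus its conjugate,
    -- i.e. `2 i Im ⟪φ, F φ⟫`, and the right side is `i c ‖F φ‖ ^ 2`.
    have h : ⟪φ, F φ⟫_ℂ - ⟪F φ, φ⟫_ℂ = Complex.I * (c : ℂ) * ((‖F φ‖ : ℂ) ^ 2) := by
      have h1 := congrArg (fun T : H →L[ℂ] H => ⟪φ, T φ⟫_ℂ) hid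
      simpa [inner_sub_right, inner_smul_right, adjoint_inner_right,
        inner_self_eq_norm_sq_to_K] using h1
    rw [← inner_conj_symm (F φ) φ] at h
    have h2 := congrArg Complex.im h
    rw [← Complex.ofReal_pow, mul_assoc, ← Complex.ofReal_mul, Complex.I_mul_im,
      Complex.ofReal_re, Complex.sub_im, Complex.conj_im] at h2
    linarith
  refine ⟨him, ?_, ?_⟩
  · rw [← him]
    exact (le_abs_self _).trans (Complex.abs_im_le_norm _)
  · exact norm_inner_le_norm φ (F φ)
end
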